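/- Suppose the SNLM parameters δ_n, t_n satisfy assumptions A1–A4. Then for every α ≥ 1 and C > 0, inf_{δ_n, t_n} sup_{f ∈ H^α(C)} R_n(f, f̂^S) = Ω(n^{-1}); that is, there exists a constant c > 0 such that for every admissible choice of δ_n and t_n, sup_{f ∈ H^α(C)} R_n(f, f̂^S) ≥ c/n for all sufficiently large n. -/

import Mathlib

open MeasureTheory ProbabilityTheory Real Finset Filter

noncomputable section

/-- The pixel grid: indices are taken mod `n` (periodic extension). -/
abbrev Px (n : ℕ) := ZMod n × ZMod n

/-- The distribution of the i.i.d. `N(0, σ²)` noise array. -/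
def noise (n : ℕ) [NeZero n] (σ : ℝ) : Measure (Px n → ℝ) :=
  Measure.pi fun _ => gaussianReal 0 (Real.toNNReal (σ ^ 2))

/-- The Hölder ball `Hölder^α(C)` of functions on `ℝ`. -/
def HolderBall (α C : ℝ) : Set (ℝ → ℝ) :=
  {h | ∀ t t' : ℝ,
    |iteratedDeriv ⌊α⌋₊ h t - iteratedDeriv ⌊α⌋₊ h t'| ≤ C * |t - t'| ^ (α - (⌊α⌋₊ : ℝ))}

/-- Edge contours of the Horizon class `H^α(C)`. -/
def HorizonFns (α C : ℝ) : Set (ℝ → ℝ) := HolderBall α C ∩ HolderBall 1 1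

/-- The Horizon image `f_h(t₁,t₂) = 1_{t₂ < h t₁}`. -/
def horizonImg (h : ℝ → ℝ) (t₁ t₂ : ℝ) : ℝ := if t₂ < h t₁ then 1 else 0

/-- `x_{i,j}`: average of `f` over `Pixel(i,j)`. -/
def pixelAvg (n : ℕ) [NeZero n] (f : ℝ → ℝ → ℝ) (p : Px n) : ℝ :=
  (n : ℝ) ^ 2 * ∫ t₁ in ((p.1.val : ℝ) / n)..(((p.1.val : ℝ) + 1) / n),
      ∫ t₂ in ((p.2.val : ℝ) / n)..(((p.2.val : ℝ) + 1) / n), f t₁ t₂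

/-- The pixel array of the Horizon image `f_h`. -/
def horizonPixels (n : ℕ) [NeZero n] (h : ℝ → ℝ) : Px n → ℝ :=
  pixelAvg n (horizonImg h)

/-- The risk `R_n(f, f̂) = E[(1/n²) Σ (x_{i,j} - f̂_{i,j})²]` of an estimator `est`
which maps observations `y = x + z` to an estimated pixel array. -/
def risk (n : ℕ) [NeZero n] (σ : ℝ) (x : Px n → ℝ)
    (est : (Px n → ℝ) → Px n → ℝ) : ℝ :=
  ∫ z, (1 / (n : ℝ) ^ 2) * ∑ p : Px n, (x p - est (fun q => x q + z q) p) ^ 2 ∂(noise n σ)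


/-- The square window of offsets `{-δ,…,δ}²`. -/
def offsets (δ : ℕ) : Finset (ℤ × ℤ) :=
  Finset.Icc (-(δ : ℤ)) (δ : ℤ) ×ˢ Finset.Icc (-(δ : ℤ)) (δ : ℤ)

/-- Shift a pixel by an integer offset (periodic extension). -/
def shift {n : ℕ} (p : Px n) (o : ℤ × ℤ) : Px n :=
  (p.1 + (o.1 : ZMod n), p.2 + (o.2 : ZMod n))

/-- The `δ`-neighborhood distance `d²_δ(y_p, y_q)` (center element removed),
normalized by `ρ² = (2δ+1)² - 1`. -/
def nlmDist2 (n : ℕ) (δ : ℕ) (y : Px n → ℝ) (p q : Px n) : ℝ :=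
  (1 / (((2 * δ + 1) ^ 2 - 1 : ℕ) : ℝ)) *
    ((∑ o ∈ offsets δ, |y (shift p o) - y (shift q o)| ^ 2) - |y p - y q| ^ 2)

/-- The (hard-thresholded) NLM weight: `1` if `d²_δ(y_p, y_q) ≤ 2σ² + t`, else `0`. -/
def nlmWeight (n : ℕ) (δ : ℕ) (σ t : ℝ) (y : Px n → ℝ) (p q : Px n) : ℝ :=
  if nlmDist2 n δ y p q ≤ 2 * σ ^ 2 + t then 1 else 0

/-- The NLM estimate at pixel `p` (search over the whole image). -/
def nlmEst (n : ℕ) [NeZero n] (δ : ℕ) (σ t : ℝ) (y : Px n → ℝ) (p : Px n) : ℝ :=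
  (∑ q : Px n, nlmWeight n δ σ t y p q * y q) / (∑ q : Px n, nlmWeight n δ σ t y p q)

/-- The semi-oracle `δ`-neighborhood distance `d̄²_δ(y_p, y_q)`: the reference
neighborhood uses the noise-free values `x`, the other the observations `y`. -/
def snlmDist2 (n : ℕ) (δ : ℕ) (x y : Px n → ℝ) (p q : Px n) : ℝ :=
  (1 / (((2 * δ + 1) ^ 2 - 1 : ℕ) : ℝ)) *
    ((∑ o ∈ offsets δ, |x (shift p o) - y (shift q o)| ^ 2) - (x p - y q) ^ 2)

/-- The semi-oracle NLM weight: `1` if `d̄²_δ(y_p, y_q) ≤ σ² + t`, else `0`. -/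
def snlmWeight (n : ℕ) (δ : ℕ) (σ t : ℝ) (x y : Px n → ℝ) (p q : Px n) : ℝ :=
  if snlmDist2 n δ x y p q ≤ σ ^ 2 + t then 1 else 0

/-- The semi-oracle NLM estimate at pixel `p` (search over the whole image). -/
def snlmEst (n : ℕ) [NeZero n] (δ : ℕ) (σ t : ℝ) (x y : Px n → ℝ) (p : Px n) : ℝ :=
  (∑ q : Px n, snlmWeight n δ σ t x y p q * y q) /
    (∑ q : Px n, snlmWeight n δ σ t x y p q)

/-- The risk of the semi-oracle NLM on the image with pixel array `x`. -/
def snlmRisk (n : ℕ) [NeZero n] (σ : ℝ) (δ : ℕ) (t : ℝ) (x : Px n → ℝ) : ℝ :=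
  ∫ z, (1 / (n : ℝ) ^ 2) * ∑ p : Px n,
    (x p - snlmEst n δ σ t x (fun q => x q + z q) p) ^ 2 ∂(noise n σ)

/-! Consider the image whose row `p.2 = 0` consists of ones, all other pixels being zero. The
noise-free distance from a row pixel to a pixel whose window misses the row is `2δ/ρ² ≤ 1/ρ`. This
is of the same order as the fluctuations of the normalized `χ²` variable by which the noise enters
the semi-oracle distance, so by the central limit theorem such a flat pixel passes the threshold
with probability bounded below, uniformly in `δ`, `n` and `t ≥ 0`. Since flat pixels make up at
least half of the image, the weighted average at each of the `n` row pixels is biased towards zero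
by a constant, which contributes a constant times `n / n²` to the risk.
-/

section IndependentSums

variable {Ω Ω' : Type*} {mΩ : MeasurableSpace Ω} {mΩ' : MeasurableSpace Ω'}
  {P : Measure Ω} {Q : Measure Ω'}

lemma identDistrib_sum_of_card_eq {ι κ : Type*} {X : ι → Ω → ℝ} {Y : κ → Ω' → ℝ}
    (hX : iIndepFun X P) (hY : iIndepFun Y Q) (hXY : ∀ i j, IdentDistrib (X i) (Y j) P Q)
    {S : Finset ι} {T : Finset κ} (hST : #S = #T) :
    IdentDistrib (fun ω => ∑ i ∈ S, X i ω) (fun ω => ∑ j ∈ T, Y j ω) P Q := by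
  let e : S ≃ T := Finset.equivOfCardEq hST
  have hjoint : IdentDistrib (fun ω (i : S) => X i ω) (fun ω (i : S) => Y (e i) ω) P Q :=
    IdentDistrib.pi (fun i => hXY i (e i)) (hX.precomp Subtype.val_injective)
      (hY.precomp (Subtype.val_injective.comp e.injective))
  convert hjoint.comp (u := fun x : S → ℝ => ∑ i, x i) (by fun_prop) using 1
  · ext ω
    exact (S.sum_coe_sort fun i => X i ω).symm
  · ext ω
    exact (T.sum_coe_sort fun j => Y j ω).symm.trans (e.sum_comp fun j : T => Y j ω).symm

lemma exists_pos_eventually_le_measureReal_sum_le [IsProbabilityMeasure P] {X : ℕ → Ω → ℝ}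
    (hindep : iIndepFun X P) (hident : ∀ i, IdentDistrib (X i) (X 0) P P)
    (hvar : Var[X 0; P] ≠ 0) (K : ℝ) :
    ∃ c : ℝ, 0 < c ∧ ∀ᶠ m : ℕ in atTop,
      c ≤ P.real {ω | ∑ k ∈ range m, X k ω ≤ m * P[X 0] - K * √m} := by
  set w : NNReal := Var[X 0; P].toNNReal
  have hw0 : w ≠ 0 := (Real.toNNReal_pos.2 ((variance_nonneg _ _).lt_of_ne' hvar)).ne'
  have hL2 : MemLp (X 0) 2 P :=
    memLp_two_of_variance_ne_zero (hident 0).aemeasurable_fst.aestronglyMeasurable hvar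
  have hclt := tendstoInDistribution_inv_sqrt_mul_sum_sub (Y := id) (P' := gaussianReal 0 w)
    ⟨by fun_prop, Measure.map_id⟩ hL2 hindep hident
  have hliminf := ProbabilityMeasure.le_liminf_measure_open_of_tendsto hclt.tendsto
    (isOpen_Iio (a := -K))
  simp only [ProbabilityMeasure.coe_mk, Measure.map_id] at hliminf
  have := (gaussianReal_absolutelyContinuous' 0 hw0).isOpenPosMeasure
  obtain ⟨c, _, hc⟩ := ENNReal.lt_iff_exists_real_btwn.1
    (isOpen_Iio.measure_pos (gaussianReal 0 w) (Set.nonempty_Iio (a := -K)))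
  refine ⟨c, by simpa using hc.1, ?_⟩
  filter_upwards [eventually_lt_of_lt_liminf (hc.2.trans_le hliminf), eventually_gt_atTop 0]
    with m hm hm0
  rw [Measure.map_apply_of_aemeasurable (hclt.forall_aemeasurable m) measurableSet_Iio] at hm
  refine ((ENNReal.ofReal_le_iff_le_toReal (by finiteness)).1 hm.le).trans
    (measureReal_mono fun ω hω => ?_)
  have hsqrt : 0 < √(m : ℝ) := Real.sqrt_pos.2 (by exact_mod_cast hm0)
  have hω' : (√(m : ℝ))⁻¹ * (∑ k ∈ range m, X k ω - m * P[X 0]) < -K := hω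
  rw [inv_mul_lt_iff₀ hsqrt] at hω'
  change ∑ k ∈ range m, X k ω ≤ m * P[X 0] - K * √m
  linarith

lemma exists_pos_le_pi_measureReal_sum_le {E : Type*} [MeasurableSpace E] {μ : Measure E}
    [IsProbabilityMeasure μ] {f : E → ℝ} (hf : Measurable f) (hvar : Var[f; μ] ≠ 0) (K : ℝ) :
    ∃ c : ℝ, 0 < c ∧ ∃ M : ℕ, ∀ {ι : Type*} [Fintype ι] (T : Finset ι), M ≤ #T →
      c ≤ (Measure.pi fun _ : ι => μ).real {z | ∑ s ∈ T, f (z s) ≤ #T * μ[f] - K * √(#T : ℝ)} := by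
  let P : Measure (ℕ → E) := Measure.infinitePi fun _ => μ
  have hlaw (i : ℕ) : MeasurePreserving (fun ω : ℕ → E => ω i) P μ :=
    measurePreserving_eval_infinitePi _ i
  have hX (i : ℕ) : IdentDistrib (fun ω : ℕ → E => f (ω i)) f P μ :=
    .comp (g := id) ⟨(hlaw i).aemeasurable, by fun_prop, by rw [(hlaw i).map_eq, Measure.map_id]⟩ hf
  have hindep : iIndepFun (fun i (ω : ℕ → E) => f (ω i)) P :=
    iIndepFun_infinitePi (X := fun _ => f) fun _ => hf
  obtain ⟨c, hc0, hc⟩ := exists_pos_eventually_le_measureReal_sum_le hindep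
    (fun i => (hX i).trans (hX 0).symm) ((hX 0).variance_eq ▸ hvar) K
  obtain ⟨M, hM⟩ := eventually_atTop.1 hc
  refine ⟨c, hc0, M, fun {ι} _ T hT => (hM _ hT).trans_eq ?_⟩
  have hY (s : ι) : IdentDistrib (fun z : ι → E => f (z s)) f (Measure.pi fun _ => μ) μ :=
    .comp (g := id) ⟨(measurePreserving_eval (fun _ : ι => μ) s).aemeasurable, by fun_prop,
      by rw [(measurePreserving_eval (fun _ : ι => μ) s).map_eq, Measure.map_id]⟩ hf
  have hsum := identDistrib_sum_of_card_eq hindep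
    (iIndepFun_pi (μ := fun _ : ι => μ) (X := fun _ => f) fun _ => hf.aemeasurable)
    (fun i s => (hX i).trans (hY s).symm) (card_range #T)
  rw [(hX 0).integral_eq]
  exact congrArg ENNReal.toReal (hsum.measure_mem_eq measurableSet_Iic)

end IndependentSums

section Symmetry

instance isNegInvariant_gaussianReal_zero (v : NNReal) : (gaussianReal 0 v).IsNegInvariant :=
  ⟨(gaussianReal_map_neg (μ := 0)).trans (by rw [neg_zero])⟩

lemma measureReal_le_two_mul_measureReal_inter {G : Type*} [InvolutiveNeg G] [MeasurableSpace G]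
    [MeasurableNeg G] {P : Measure G} [IsFiniteMeasure P] [P.IsNegInvariant] {E : Set G}
    (hE : ∀ z ∈ E, -z ∈ E) {L : G → ℝ} (hL : ∀ z, L (-z) = -L z) :
    P.real E ≤ 2 * P.real (E ∩ {z | 0 ≤ L z}) := by
  set F := E ∩ {z | 0 ≤ L z}
  have hcover : E ⊆ F ∪ -F := fun z hz => by
    rcases le_total 0 (L z) with h | h
    · exact Or.inl ⟨hz, h⟩
    · exact Or.inr ⟨hE z hz, by simpa [hL] using h⟩
  calc P.real E ≤ P.real F + P.real (-F) :=
        (measureReal_mono hcover).trans (measureReal_union_le _ _)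
    _ = 2 * P.real F := by rw [measureReal_def P (-F), Measure.measure_neg, ← measureReal_def]; ring

lemma integral_pi_mul_eval_eq_zero {ι : Type*} [Fintype ι] {μ : ι → Measure ℝ}
    [∀ i, SigmaFinite (μ i)] (q : ι) [(μ q).IsNegInvariant] {f : (ι → ℝ) → ℝ}
    (hf : DependsOn f {q}ᶜ) :
    ∫ z, f z * z q ∂Measure.pi μ = 0 := by
  classical
  let reflect (z : ι → ℝ) (i : ι) : ℝ := if i = q then -z i else z i
  have hinv : Function.Involutive reflect := fun z => by
    ext i
    by_cases hi : i = q <;> simp [reflect, hi]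
  have hpres : MeasurePreserving reflect (Measure.pi μ) (Measure.pi μ) := by
    refine measurePreserving_pi μ μ (f := fun i x => if i = q then -x else x) fun i => ?_
    by_cases hi : i = q
    · subst hi
      simpa using Measure.measurePreserving_neg (μ i)
    · simp only [hi, if_false]
      exact MeasurePreserving.id (μ i)
  have hodd (z : ι → ℝ) : f (reflect z) * reflect z q = -(f z * z q) := by
    have : f (reflect z) = f z := hf fun i hi => if_neg hi
    simp [this, reflect]
  have hcomp := hpres.integral_comp
    (MeasurableEquiv.ofInvolutive reflect hinv hpres.measurable).measurableEmbedding
    fun z => f z * z q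
  simp only [hodd, integral_neg] at hcomp
  linarith

end Symmetry

section GaussianSquare

lemma variance_ne_zero_of_continuous {X : Type*} [TopologicalSpace X] [MeasurableSpace X]
    {μ : Measure X} [IsProbabilityMeasure μ] [μ.IsOpenPosMeasure] {f : X → ℝ} (hf : Continuous f)
    (hL2 : MemLp f 2 μ) {a b : X} (hab : f a ≠ f b) : Var[f; μ] ≠ 0 := fun h => by
  have hconst : f = fun _ => μ[f] :=
    (hf.ae_eq_iff_eq μ continuous_const).1 (ae_eq_integral_of_variance_eq_zero hL2 h)
  exact hab ((congrFun hconst a).trans (congrFun hconst b).symm)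

lemma variance_sq_gaussianReal_ne_zero (m : ℝ) {v : NNReal} (hv : v ≠ 0) :
    Var[fun x => x ^ 2; gaussianReal m v] ≠ 0 := by
  have := (gaussianReal_absolutelyContinuous' m hv).isOpenPosMeasure
  have hL2 : MemLp (fun x : ℝ => x ^ 2) 2 (gaussianReal m v) := by
    rw [memLp_two_iff_integrable_sq (by fun_prop)]
    convert (memLp_id_gaussianReal (μ := m) (v := v) 4).integrable_norm_pow (p := 4) (by norm_num)
      using 2 with x
    rw [Real.norm_eq_abs, id, Even.pow_abs (by decide), ← pow_mul]
  exact variance_ne_zero_of_continuous (by fun_prop) hL2 (a := 0) (b := 1) (by norm_num)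

lemma integral_sq_gaussianReal_zero (v : NNReal) : ∫ x, x ^ 2 ∂gaussianReal 0 v = v := by
  rw [← variance_fun_id_gaussianReal (μ := 0) (v := v),
    variance_of_integral_eq_zero (by fun_prop) (by simp)]

end GaussianSquare

section Noise

variable {n : ℕ} [NeZero n] {σ : ℝ}

instance isProbabilityMeasure_noise : IsProbabilityMeasure (noise n σ) :=
  inferInstanceAs (IsProbabilityMeasure (Measure.pi _))

instance isNegInvariant_noise : (noise n σ).IsNegInvariant :=
  Measure.pi.isNegInvariant _

lemma memLp_eval_noise (q : Px n) {r : ENNReal} (hr : r ≠ ⊤) :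
    MemLp (fun z : Px n → ℝ => z q) r (noise n σ) :=
  (memLp_id_gaussianReal' r hr).comp_measurePreserving (measurePreserving_eval _ q)

lemma integrable_eval_noise (q : Px n) : Integrable (fun z : Px n → ℝ => z q) (noise n σ) :=
  (memLp_eval_noise q (by simp)).integrable le_rfl

end Noise

section Neighborhoods

/-- The window `{-δ,…,δ}²` without its centre; it has `ρ²` elements. -/
def puncturedOffsets (δ : ℕ) : Finset (ℤ × ℤ) := (offsets δ).erase 0

lemma zero_mem_offsets (δ : ℕ) : (0 : ℤ × ℤ) ∈ offsets δ := by simp [offsets]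

lemma shift_zero {n : ℕ} (q : Px n) : shift q 0 = q := by simp [shift]

lemma card_Icc_neg_self (δ : ℕ) : #(Icc (-(δ : ℤ)) δ) = 2 * δ + 1 := by
  rw [Int.card_Icc]
  lia

lemma card_puncturedOffsets (δ : ℕ) : #(puncturedOffsets δ) = (2 * δ + 1) ^ 2 - 1 := by
  rw [puncturedOffsets, card_erase_of_mem (zero_mem_offsets δ), offsets, card_product,
    card_Icc_neg_self, sq]

lemma le_card_puncturedOffsets (δ : ℕ) : δ ≤ #(puncturedOffsets δ) := by
  rw [card_puncturedOffsets]
  exact Nat.le_sub_one_of_lt (by nlinarith)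

lemma injOn_intCast_zmod_Icc {n δ : ℕ} (hn : 2 * δ < n) :
    Set.InjOn (Int.cast : ℤ → ZMod n) (Icc (-(δ : ℤ)) δ) := fun a ha b hb hab => by
  rw [mem_coe, mem_Icc] at ha hb
  have hdvd := (ZMod.intCast_eq_intCast_iff_dvd_sub a b n).1 hab
  have := Int.eq_zero_of_abs_lt_dvd hdvd (by rw [abs_lt]; lia)
  lia

lemma injOn_shift_offsets {n δ : ℕ} (hn : 2 * δ < n) (q : Px n) :
    Set.InjOn (shift q) (offsets δ) := fun o ho o' ho' h => by
  rw [mem_coe, offsets, mem_product] at ho ho'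
  simp only [shift, Prod.mk.injEq, add_right_inj] at h
  exact Prod.ext (injOn_intCast_zmod_Icc hn ho.1 ho'.1 h.1)
    (injOn_intCast_zmod_Icc hn ho.2 ho'.2 h.2)

lemma injOn_shift_puncturedOffsets {n δ : ℕ} (hn : 2 * δ < n) (q : Px n) :
    Set.InjOn (shift q) (puncturedOffsets δ) :=
  (injOn_shift_offsets hn q).mono (erase_subset _ _)

lemma shift_ne_self_of_mem_puncturedOffsets {n δ : ℕ} (hn : 2 * δ < n) (q : Px n) {o : ℤ × ℤ}
    (ho : o ∈ puncturedOffsets δ) : shift q o ≠ q := fun h =>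
  ne_of_mem_erase ho <| injOn_shift_offsets hn q (mem_of_mem_erase ho) (zero_mem_offsets δ)
    (h.trans (shift_zero q).symm)

variable {n δ : ℕ} {x y z : Px n → ℝ} {p q : Px n}

lemma snlmDist2_eq_sum_div : snlmDist2 n δ x y p q =
    (∑ o ∈ puncturedOffsets δ, (x (shift p o) - y (shift q o)) ^ 2) / #(puncturedOffsets δ) := by
  rw [snlmDist2, ← card_puncturedOffsets, one_div_mul_eq_div,
    ← add_sum_erase _ _ (zero_mem_offsets δ), shift_zero, shift_zero]
  simp only [sq_abs, add_sub_cancel_left, puncturedOffsets]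

lemma snlmDist2_self : snlmDist2 n δ x x p q = nlmDist2 n δ x p q := by
  rw [snlmDist2, nlmDist2, sq_abs (x p - x q)]

lemma snlmDist2_add : snlmDist2 n δ x (x + z) p q = nlmDist2 n δ x p q +
    (∑ o ∈ puncturedOffsets δ, z (shift q o) ^ 2 -
      2 * ∑ o ∈ puncturedOffsets δ, (x (shift p o) - x (shift q o)) * z (shift q o)) /
        #(puncturedOffsets δ) := by
  rw [← snlmDist2_self, snlmDist2_eq_sum_div, snlmDist2_eq_sum_div, ← add_div, mul_sum,
    ← sum_sub_distrib, ← sum_add_distrib]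
  congr 1
  refine sum_congr rfl fun o _ => ?_
  rw [Pi.add_apply]
  ring

end Neighborhoods

section Weights

variable {n δ : ℕ} {σ t : ℝ} {x y z : Px n → ℝ} {p q : Px n}

lemma snlmWeight_nonneg : 0 ≤ snlmWeight n δ σ t x y p q := by
  unfold snlmWeight
  split_ifs <;> norm_num

lemma snlmWeight_le_one : snlmWeight n δ σ t x y p q ≤ 1 := by
  unfold snlmWeight
  split_ifs <;> norm_num

lemma measurable_snlmWeight : Measurable fun z => snlmWeight n δ σ t x (x + z) p q := by
  refine Measurable.ite (measurableSet_le ?_ measurable_const) measurable_const measurable_const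
  simp only [snlmDist2_eq_sum_div, Pi.add_apply]
  fun_prop

lemma memLp_top_snlmWeight [NeZero n] :
    MemLp (fun z => snlmWeight n δ σ t x (x + z) p q) ⊤ (noise n σ) :=
  memLp_top_of_bound measurable_snlmWeight.aestronglyMeasurable 1 <| .of_forall fun _ => by
    rw [Real.norm_of_nonneg snlmWeight_nonneg]
    exact snlmWeight_le_one

lemma dependsOn_snlmWeight (hn : 2 * δ < n) :
    DependsOn (fun z => snlmWeight n δ σ t x (x + z) p q) {q}ᶜ := fun z z' h => by
  have hdist : snlmDist2 n δ x (x + z) p q = snlmDist2 n δ x (x + z') p q := by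
    rw [snlmDist2_eq_sum_div, snlmDist2_eq_sum_div]
    congr 1
    refine sum_congr rfl fun o ho => ?_
    rw [Pi.add_apply, Pi.add_apply, h _ (shift_ne_self_of_mem_puncturedOffsets hn q ho)]
  simp only [snlmWeight, hdist]

lemma snlmWeight_eq_one {K : ℝ} (hδ : 0 < δ) (ht : 0 ≤ t)
    (hdist : nlmDist2 n δ x p q ≤ K / √(#(puncturedOffsets δ) : ℝ))
    (hsq : ∑ o ∈ puncturedOffsets δ, z (shift q o) ^ 2 ≤
      #(puncturedOffsets δ) * σ ^ 2 - K * √(#(puncturedOffsets δ) : ℝ))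
    (hcross : 0 ≤ ∑ o ∈ puncturedOffsets δ, (x (shift p o) - x (shift q o)) * z (shift q o)) :
    snlmWeight n δ σ t x (x + z) p q = 1 := by
  refine if_pos ?_
  set ρ2 : ℝ := (#(puncturedOffsets δ) : ℝ)
  have hρ : 0 < ρ2 := Nat.cast_pos.2 (hδ.trans_le (le_card_puncturedOffsets δ))
  calc snlmDist2 n δ x (x + z) p q ≤ K / √ρ2 + (ρ2 * σ ^ 2 - K * √ρ2) / ρ2 := by
        rw [snlmDist2_add]
        refine add_le_add hdist (div_le_div_of_nonneg_right ?_ hρ.le)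
        linarith
    _ = σ ^ 2 := by
        rw [sub_div, mul_div_cancel_left₀ _ hρ.ne', mul_div_assoc, Real.sqrt_div_self', mul_one_div]
        ring
    _ ≤ σ ^ 2 + t := le_add_of_nonneg_right ht

/-- The noise-free discrepancy `K / ρ` is of the order of the fluctuations of `ρ⁻² ∑ z²` around
`σ²`, so the latter compensate it with probability bounded below; the cross term is odd in the noise
and costs at most a factor `2`. -/
lemma exists_pos_le_integral_snlmWeight (hσ : σ ≠ 0) (K : ℝ) :
    ∃ c : ℝ, 0 < c ∧ ∃ M : ℕ, ∀ (n : ℕ) [NeZero n] (δ : ℕ) (t : ℝ) (x : Px n → ℝ) (p q : Px n),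
      M ≤ δ → 2 * δ < n → 0 ≤ t → nlmDist2 n δ x p q ≤ K / √(#(puncturedOffsets δ) : ℝ) →
      c ≤ ∫ z, snlmWeight n δ σ t x (x + z) p q ∂noise n σ := by
  have hv : (σ ^ 2).toNNReal ≠ 0 := (Real.toNNReal_pos.2 (by positivity)).ne'
  obtain ⟨c, hc, M, hM⟩ := exists_pos_le_pi_measureReal_sum_le (by fun_prop)
    (variance_sq_gaussianReal_ne_zero 0 hv) K
  rw [integral_sq_gaussianReal_zero, Real.coe_toNNReal _ (sq_nonneg σ)] at hM
  refine ⟨c / 2, half_pos hc, M + 1, fun n _ δ t x p q hδ hn ht hdist => ?_⟩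
  have hinj := injOn_shift_puncturedOffsets hn q
  have hcard : #((puncturedOffsets δ).image (shift q)) = #(puncturedOffsets δ) :=
    card_image_of_injOn hinj
  have hlow := hM ((puncturedOffsets δ).image (shift q))
    (by have := le_card_puncturedOffsets δ; lia)
  simp only [hcard, sum_image hinj] at hlow
  have hsymm := measureReal_le_two_mul_measureReal_inter (P := noise n σ)
    (E := {z | ∑ o ∈ puncturedOffsets δ, z (shift q o) ^ 2 ≤
      #(puncturedOffsets δ) * σ ^ 2 - K * √(#(puncturedOffsets δ) : ℝ)})
    (L := fun z => ∑ o ∈ puncturedOffsets δ, (x (shift p o) - x (shift q o)) * z (shift q o))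
    (fun z hz => by simpa using hz) (fun z => by simp)
  have hmarkov := mul_meas_ge_le_integral_of_nonneg (μ := noise n σ)
    (.of_forall fun _ => snlmWeight_nonneg)
    (memLp_top_snlmWeight (δ := δ) (t := t) (x := x) (p := p) (q := q).integrable le_top) 1
  rw [one_mul] at hmarkov
  exact ((div_le_iff₀' two_pos).2 (hlow.trans hsymm)).trans <| (measureReal_mono fun z hz =>
    (snlmWeight_eq_one (by lia) ht hdist hz.1 hz.2).ge).trans hmarkov

end Weights

section Error

/-- The error of the semi-oracle estimate at the pixel `p`, as a function of the noise `z`. -/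
def snlmError (n : ℕ) [NeZero n] (δ : ℕ) (σ t : ℝ) (x : Px n → ℝ) (p : Px n) (z : Px n → ℝ) : ℝ :=
  x p - snlmEst n δ σ t x (x + z) p

variable {n : ℕ} [NeZero n] {δ : ℕ} {σ t : ℝ} {x y z : Px n → ℝ} {p q : Px n}

lemma natCast_card_px : (Fintype.card (Px n) : ℝ) = (n : ℝ) ^ 2 := by
  simp [Fintype.card_prod, ZMod.card, sq]

lemma abs_snlmEst_le : |snlmEst n δ σ t x y p| ≤ ∑ q, |y q| := by
  rw [snlmEst, sum_div]
  refine (abs_sum_le_sum_abs _ _).trans (sum_le_sum fun q _ => ?_)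
  have hle : snlmWeight n δ σ t x y p q ≤ ∑ q, snlmWeight n δ σ t x y p q :=
    single_le_sum (f := fun q => snlmWeight n δ σ t x y p q) (fun _ _ => snlmWeight_nonneg)
      (mem_univ q)
  have hsum := snlmWeight_nonneg.trans hle
  rw [mul_div_right_comm, abs_mul, abs_of_nonneg (div_nonneg snlmWeight_nonneg hsum)]
  exact mul_le_of_le_one_left (abs_nonneg _) (div_le_one_of_le₀ hle hsum)

lemma abs_snlmError_le {B : ℝ} (hx : ∀ q, |x q| ≤ B) :
    |snlmError n δ σ t x p z| ≤ B + ∑ q, (B + |z q|) :=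
  (abs_sub _ _).trans <| add_le_add (hx p) <| abs_snlmEst_le.trans <|
    sum_le_sum fun q _ => (abs_add_le _ _).trans (add_le_add_left (hx q) _)

lemma memLp_const_add_sum_abs_noise (B : ℝ) :
    MemLp (fun z : Px n → ℝ => B + ∑ q, (B + |z q|)) 2 (noise n σ) :=
  (memLp_const B).add <| memLp_finsetSum _ fun q _ =>
    (memLp_const B).add (memLp_eval_noise q (by simp)).abs

lemma measurable_snlmError : Measurable (snlmError n δ σ t x p) := by
  have (q : Px n) := measurable_snlmWeight (δ := δ) (σ := σ) (t := t) (x := x) (p := p) (q := q)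
  unfold snlmError snlmEst
  simp only [Pi.add_apply]
  fun_prop

lemma memLp_snlmError : MemLp (snlmError n δ σ t x p) 2 (noise n σ) :=
  (memLp_const_add_sum_abs_noise (∑ q, |x q|)).mono' measurable_snlmError.aestronglyMeasurable <|
    .of_forall fun _ => abs_snlmError_le fun q =>
      single_le_sum (f := fun q => |x q|) (fun _ _ => abs_nonneg _) (mem_univ q)

lemma snlmRisk_eq_sum_integral : snlmRisk n σ δ t x =
    1 / (n : ℝ) ^ 2 * ∑ p, ∫ z, snlmError n δ σ t x p z ^ 2 ∂noise n σ := by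
  rw [← integral_finsetSum _ fun p _ => memLp_snlmError.integrable_sq, ← integral_const_mul]
  rfl

lemma snlmRisk_le {B : ℝ} (hx : ∀ q, |x q| ≤ B) :
    snlmRisk n σ δ t x ≤ ∫ z, (B + ∑ q, (B + |z q|)) ^ 2 ∂noise n σ := by
  have hn : (n : ℝ) ≠ 0 := by exact_mod_cast NeZero.ne n
  calc snlmRisk n σ δ t x
      ≤ 1 / (n : ℝ) ^ 2 * ∑ _p : Px n, ∫ z, (B + ∑ q, (B + |z q|)) ^ 2 ∂noise n σ := by
        rw [snlmRisk_eq_sum_integral]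
        refine mul_le_mul_of_nonneg_left (sum_le_sum fun p _ => ?_) (by positivity)
        refine integral_mono memLp_snlmError.integrable_sq
          (memLp_const_add_sum_abs_noise B).integrable_sq fun z => ?_
        exact sq_le_sq.2 ((abs_snlmError_le hx).trans (le_abs_self _))
    _ = _ := by
        rw [sum_const, card_univ, nsmul_eq_mul, natCast_card_px]
        field_simp

lemma abs_sum_snlmWeight_mul_sub_le (a : ℝ) :
    |∑ q, snlmWeight n δ σ t x y p q * (a - y q)| ≤
      (n : ℝ) ^ 2 * |a - snlmEst n δ σ t x y p| := by
  set W := ∑ q, snlmWeight n δ σ t x y p q with hW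
  have hW_nonneg : 0 ≤ W := sum_nonneg fun _ _ => snlmWeight_nonneg
  have hW_le : W ≤ (n : ℝ) ^ 2 := by
    rw [← natCast_card_px, ← nsmul_one]
    exact sum_le_card_nsmul _ _ _ fun _ _ => snlmWeight_le_one
  have hsum : ∑ q, snlmWeight n δ σ t x y p q * y q = W * snlmEst n δ σ t x y p := by
    by_cases hW0 : W = 0
    · have hzero := (sum_eq_zero_iff_of_nonneg fun _ _ => snlmWeight_nonneg).1 hW0
      rw [hW0, zero_mul]
      exact sum_eq_zero fun q hq => by rw [hzero q hq, zero_mul]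
    · rw [snlmEst, ← hW, mul_div_cancel₀ _ hW0]
  simp only [mul_sub, sum_sub_distrib, ← sum_mul]
  rw [hsum, ← hW, ← mul_sub, abs_mul, abs_of_nonneg hW_nonneg]
  gcongr

lemma integrable_snlmWeight_mul {f : (Px n → ℝ) → ℝ} (hf : Integrable f (noise n σ)) :
    Integrable (fun z => snlmWeight n δ σ t x (x + z) p q * f z) (noise n σ) :=
  hf.mul_of_top_right memLp_top_snlmWeight

/-- The centre is excluded from the distance, so the weight of `q` is independent of the noise at
`q`, which therefore averages out. -/
lemma integral_snlmWeight_mul_sub (hn : 2 * δ < n) (a : ℝ) :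
    ∫ z, snlmWeight n δ σ t x (x + z) p q * (a - (x + z) q) ∂noise n σ =
      (∫ z, snlmWeight n δ σ t x (x + z) p q ∂noise n σ) * (a - x q) := by
  have hzero : ∫ z, snlmWeight n δ σ t x (x + z) p q * z q ∂noise n σ = 0 :=
    integral_pi_mul_eval_eq_zero q (dependsOn_snlmWeight hn)
  calc _ = ∫ z, snlmWeight n δ σ t x (x + z) p q * (a - x q) -
          snlmWeight n δ σ t x (x + z) p q * z q ∂noise n σ := by
        congr with z
        rw [Pi.add_apply]
        ring
    _ = _ := by
        rw [integral_sub (integrable_snlmWeight_mul (integrable_const _))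
          (integrable_snlmWeight_mul (integrable_eval_noise q)), hzero, sub_zero,
          integral_mul_const]

lemma sq_bias_le_integral_sq_snlmError (hn : 2 * δ < n) :
    ((∑ q, (∫ z, snlmWeight n δ σ t x (x + z) p q ∂noise n σ) * (x p - x q)) / (n : ℝ) ^ 2) ^ 2 ≤
      ∫ z, snlmError n δ σ t x p z ^ 2 ∂noise n σ := by
  have hn0 : (0 : ℝ) < n := by exact_mod_cast NeZero.pos n
  have hbias : |∑ q, (∫ z, snlmWeight n δ σ t x (x + z) p q ∂noise n σ) * (x p - x q)| ≤
      (n : ℝ) ^ 2 * ∫ z, |snlmError n δ σ t x p z| ∂noise n σ := by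
    simp only [← integral_snlmWeight_mul_sub hn]
    have hint (q : Px n) : Integrable
        (fun z => snlmWeight n δ σ t x (x + z) p q * (x p - (x + z) q)) (noise n σ) :=
      integrable_snlmWeight_mul <|
        (integrable_const _).sub ((integrable_const _).add (integrable_eval_noise q))
    rw [← integral_finsetSum _ fun q _ => hint q, ← integral_const_mul]
    refine abs_integral_le_integral_abs.trans (integral_mono ?_ ?_ fun z => ?_)
    · exact (integrable_finsetSum _ fun q _ => hint q).abs
    · exact (memLp_snlmError.integrable one_le_two).abs.const_mul _
    · exact abs_sum_snlmWeight_mul_sub_le _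
  calc _ ≤ (∫ z, |snlmError n δ σ t x p z| ∂noise n σ) ^ 2 := by
        rw [← sq_abs, abs_div, abs_of_pos (pow_pos hn0 2)]
        gcongr
        exact (div_le_iff₀' (by positivity)).2 hbias
    _ ≤ ∫ z, |snlmError n δ σ t x p z| ^ 2 ∂noise n σ := by
        have := variance_nonneg |snlmError n δ σ t x p| (noise n σ)
        rw [variance_eq_sub memLp_snlmError.abs] at this
        exact sub_nonneg.1 this
    _ = _ := by simp only [sq_abs]

end Error

section Horizon

variable {n : ℕ} [NeZero n]

lemma abs_pixelAvg_le {f : ℝ → ℝ → ℝ} {B : ℝ} (hf : ∀ t₁ t₂, |f t₁ t₂| ≤ B) (p : Px n) :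
    |pixelAvg n f p| ≤ B := by
  have hn : (0 : ℝ) < n := by exact_mod_cast NeZero.pos n
  have hside (k : ℝ) : |(k + 1) / n - k / n| = 1 / n := by
    rw [← sub_div, add_sub_cancel_left, abs_of_pos (by positivity)]
  have hinner (t₁ : ℝ) :
      ‖∫ t₂ in ((p.2.val : ℝ) / n)..(((p.2.val : ℝ) + 1) / n), f t₁ t₂‖ ≤ B * (1 / n) :=
    (intervalIntegral.norm_integral_le_of_norm_le_const fun t₂ _ => hf t₁ t₂).trans_eq
      (by rw [hside])
  have houter := intervalIntegral.norm_integral_le_of_norm_le_const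
    (a := (p.1.val : ℝ) / n) (b := ((p.1.val : ℝ) + 1) / n) fun t₁ _ => hinner t₁
  rw [hside, Real.norm_eq_abs] at houter
  calc |pixelAvg n f p| ≤ (n : ℝ) ^ 2 * (B * (1 / n) * (1 / n)) := by
        rw [pixelAvg, abs_mul, abs_of_pos (by positivity)]
        gcongr
    _ = B := by field_simp

lemma abs_horizonPixels_le_one (h : ℝ → ℝ) (p : Px n) : |horizonPixels n h p| ≤ 1 :=
  abs_pixelAvg_le (fun t₁ t₂ => by unfold horizonImg; split_ifs <;> simp) p

lemma horizonPixels_const_div (k : ℕ) (p : Px n) :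
    horizonPixels n (fun _ => k / n) p = if p.2.val < k then 1 else 0 := by
  have hn : (0 : ℝ) < n := by exact_mod_cast NeZero.pos n
  have hinner (t₁ : ℝ) : ∫ t₂ in ((p.2.val : ℝ) / n)..(((p.2.val : ℝ) + 1) / n),
      horizonImg (fun _ => k / n) t₁ t₂ = 1 / n * if p.2.val < k then 1 else 0 := by
    rw [intervalIntegral.integral_congr_Ioo_of_le (g := fun _ => if p.2.val < k then 1 else 0)
      (by gcongr; linarith)]
    · rw [intervalIntegral.integral_const, ← sub_div, add_sub_cancel_left, smul_eq_mul]
    · rintro t₂ ⟨hlow, hhigh⟩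
      refine if_congr ⟨fun hlt => ?_, fun hlt => ?_⟩ rfl rfl
      · exact_mod_cast (div_lt_div_iff_of_pos_right hn).1 (hlow.trans hlt)
      · exact hhigh.trans_le (div_le_div_of_nonneg_right (by exact_mod_cast hlt) hn.le)
  simp only [horizonPixels, pixelAvg, hinner, intervalIntegral.integral_const, smul_eq_mul]
  field_simp
  ring

lemma const_mem_holderBall (α a : ℝ) {C : ℝ} (hC : 0 ≤ C) : (fun _ => a) ∈ HolderBall α C :=
  fun t t' => by
    simp only [iteratedDeriv_const, sub_self, abs_zero]
    positivity

lemma const_mem_horizonFns (α a : ℝ) {C : ℝ} (hC : 0 ≤ C) : (fun _ => a) ∈ HorizonFns α C :=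
  ⟨const_mem_holderBall α a hC, const_mem_holderBall 1 a zero_le_one⟩

lemma bddAbove_range_snlmRisk_horizonPixels (α C σ t : ℝ) (δ : ℕ) :
    BddAbove (Set.range fun h : HorizonFns α C => snlmRisk n σ δ t (horizonPixels n h.1)) :=
  ⟨_, Set.forall_mem_range.2 fun h => snlmRisk_le (abs_horizonPixels_le_one h.1)⟩

end Horizon

section RowImage

/-- The image used for the lower bound: ones on the row `p.2 = 0`, zeros elsewhere. -/
def rowPixels (n : ℕ) (p : Px n) : ℝ := if p.2 = 0 then 1 else 0

/-- The pixels whose `δ`-window misses the row of ones of `rowPixels`. -/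
def offRow (n : ℕ) [NeZero n] (δ : ℕ) : Finset (Px n) := {q | ∀ o ∈ offsets δ, (shift q o).2 ≠ 0}

variable {n : ℕ} {δ : ℕ} {p q : Px n}

lemma rowPixels_le_one : rowPixels n q ≤ 1 := by
  unfold rowPixels
  split_ifs <;> norm_num

lemma sum_puncturedOffsets_ite (δ : ℕ) :
    ∑ o ∈ puncturedOffsets δ, (if o.2 = 0 then 1 else 0 : ℝ) = 2 * δ := by
  have hrow : {o ∈ puncturedOffsets δ | o.2 = 0} = (Icc (-(δ : ℤ)) δ).erase 0 ×ˢ {0} := by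
    ext ⟨a, b⟩
    simp only [puncturedOffsets, offsets, mem_filter, mem_erase, mem_product, mem_Icc,
      mem_singleton, Prod.mk_eq_zero, ne_eq]
    lia
  rw [← sum_filter, hrow, sum_const, card_product, card_erase_of_mem (by simp),
    card_Icc_neg_self]
  simp

variable [NeZero n]

lemma horizonPixels_one_div : horizonPixels n (fun _ => 1 / n) = rowPixels n := by
  ext p
  simpa [rowPixels, ZMod.val_eq_zero] using horizonPixels_const_div 1 p

lemma rowPixels_shift_of_mem_offRow (hq : q ∈ offRow n δ) {o : ℤ × ℤ} (ho : o ∈ offsets δ) :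
    rowPixels n (shift q o) = 0 :=
  if_neg ((mem_filter.1 hq).2 o ho)

lemma nlmDist2_rowPixels (hn : 2 * δ < n) (hp : p.2 = 0) (hq : q ∈ offRow n δ) :
    nlmDist2 n δ (rowPixels n) p q = 2 * δ / #(puncturedOffsets δ) := by
  rw [← snlmDist2_self, snlmDist2_eq_sum_div, ← sum_puncturedOffsets_ite]
  congr 1
  refine sum_congr rfl fun o ho => ?_
  have ho' := mem_of_mem_erase ho
  have hrow : (shift p o).2 = 0 ↔ o.2 = 0 := by
    refine ⟨fun h => ?_, fun h => by simp [shift, hp, h]⟩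
    exact injOn_intCast_zmod_Icc hn (mem_product.1 ho').2 (by simp) (by simpa [shift, hp] using h)
  rw [rowPixels_shift_of_mem_offRow hq ho', rowPixels, if_congr hrow rfl rfl]
  split_ifs <;> norm_num

lemma nlmDist2_rowPixels_le (hn : 2 * δ < n) (hp : p.2 = 0) (hq : q ∈ offRow n δ) :
    nlmDist2 n δ (rowPixels n) p q ≤ 1 / √(#(puncturedOffsets δ) : ℝ) := by
  rw [nlmDist2_rowPixels hn hp hq, ← Real.sqrt_div_self']
  gcongr
  refine Real.le_sqrt_of_sq_le ?_
  rw [card_puncturedOffsets]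
  exact_mod_cast Nat.le_sub_one_of_lt (by nlinarith)

lemma sq_le_two_mul_card_offRow (hn : 2 * (2 * δ + 1) ≤ n) : n ^ 2 ≤ 2 * #(offRow n δ) := by
  have hcompl : (offRow n δ)ᶜ ⊆ univ ×ˢ (Icc (-(δ : ℤ)) δ).image fun a : ℤ => -(a : ZMod n) := by
    intro q hq
    simp only [offRow, mem_compl, mem_filter, mem_univ, true_and, not_forall, not_not] at hq
    obtain ⟨o, ho, hzero⟩ := hq
    exact mem_product.2 ⟨mem_univ _, mem_image.2
      ⟨o.2, (mem_product.1 ho).2, (eq_neg_of_add_eq_zero_left hzero).symm⟩⟩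
  have hcard : #(offRow n δ)ᶜ ≤ n * (2 * δ + 1) := by
    refine (card_le_card hcompl).trans ?_
    rw [card_product, card_univ, ZMod.card, ← card_Icc_neg_self]
    gcongr
    exact card_image_le
  have htotal := card_add_card_compl (offRow n δ)
  rw [Fintype.card_prod, ZMod.card] at htotal
  nlinarith

end RowImage

section LowerBound

lemma sq_half_le_integral_sq_snlmError_rowPixels {n : ℕ} [NeZero n] {δ : ℕ} {σ t c : ℝ} {p : Px n}
    (hn : 2 * (2 * δ + 1) ≤ n) (hc : 0 ≤ c) (hp : p.2 = 0)
    (hweight : ∀ q ∈ offRow n δ,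
      c ≤ ∫ z, snlmWeight n δ σ t (rowPixels n) (rowPixels n + z) p q ∂noise n σ) :
    (c / 2) ^ 2 ≤ ∫ z, snlmError n δ σ t (rowPixels n) p z ^ 2 ∂noise n σ := by
  have hn0 : (0 : ℝ) < n := by exact_mod_cast NeZero.pos n
  have hcard : (n : ℝ) ^ 2 ≤ 2 * #(offRow n δ) := by exact_mod_cast sq_le_two_mul_card_offRow hn
  let W (q : Px n) : ℝ := ∫ z, snlmWeight n δ σ t (rowPixels n) (rowPixels n + z) p q ∂noise n σ
  have hp1 : rowPixels n p = 1 := if_pos hp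
  refine (pow_le_pow_left₀ (by positivity) ?_ 2).trans
    (sq_bias_le_integral_sq_snlmError (by lia))
  rw [le_div_iff₀ (by positivity), hp1]
  calc c / 2 * (n : ℝ) ^ 2 ≤ ∑ _q ∈ offRow n δ, c := by
        rw [sum_const, nsmul_eq_mul]
        nlinarith
    _ ≤ ∑ q ∈ offRow n δ, W q * (1 - rowPixels n q) := sum_le_sum fun q hq => by
        have hq0 := rowPixels_shift_of_mem_offRow hq (zero_mem_offsets δ)
        rw [shift_zero] at hq0
        simpa [hq0] using hweight q hq
    _ ≤ ∑ q, W q * (1 - rowPixels n q) :=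
        sum_le_univ_sum_of_nonneg fun _ =>
          mul_nonneg (integral_nonneg fun _ => snlmWeight_nonneg) (sub_nonneg.2 rowPixels_le_one)

lemma exists_pos_div_le_snlmRisk_rowPixels {σ : ℝ} (hσ : σ ≠ 0) :
    ∃ c : ℝ, 0 < c ∧ ∃ M : ℕ, ∀ (n : ℕ) [NeZero n] (δ : ℕ) (t : ℝ),
      M ≤ δ → 2 * (2 * δ + 1) ≤ n → 0 ≤ t → c / n ≤ snlmRisk n σ δ t (rowPixels n) := by
  obtain ⟨c, hc, M, hweight⟩ := exists_pos_le_integral_snlmWeight hσ 1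
  refine ⟨(c / 2) ^ 2, by positivity, M, fun n _ δ t hδ hn ht => ?_⟩
  have hn0 : (n : ℝ) ≠ 0 := by exact_mod_cast NeZero.ne n
  have hrow (a : ZMod n) :
      (c / 2) ^ 2 ≤ ∫ z, snlmError n δ σ t (rowPixels n) (a, 0) z ^ 2 ∂noise n σ :=
    sq_half_le_integral_sq_snlmError_rowPixels hn hc.le rfl fun q hq =>
      hweight n δ t _ _ q hδ (by lia) ht (nlmDist2_rowPixels_le (by lia) rfl hq)
  calc (c / 2) ^ 2 / n = 1 / (n : ℝ) ^ 2 * ∑ _a : ZMod n, (c / 2) ^ 2 := by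
        rw [sum_const, card_univ, ZMod.card, nsmul_eq_mul]
        field_simp
    _ ≤ 1 / (n : ℝ) ^ 2 * ∑ a : ZMod n,
          ∫ z, snlmError n δ σ t (rowPixels n) (a, 0) z ^ 2 ∂noise n σ := by
        gcongr with a
        exact hrow a
    _ ≤ snlmRisk n σ δ t (rowPixels n) := by
        rw [snlmRisk_eq_sum_integral, Fintype.sum_prod_type]
        gcongr with a
        exact single_le_sum (f := fun b =>
          ∫ z, snlmError n δ σ t (rowPixels n) (a, b) z ^ 2 ∂noise n σ)
          (fun _ _ => integral_nonneg fun _ => sq_nonneg _) (mem_univ 0)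

lemma eventually_two_mul_two_mul_add_one_le {δ : ℕ → ℕ} {β c : ℝ} (hβ : β < 1)
    (hδ : ∀ n : ℕ, (δ n : ℝ) ≤ c * (n : ℝ) ^ β) : ∀ᶠ n in atTop, 2 * (2 * δ n + 1) ≤ n := by
  have hdecay : Tendsto (fun n : ℕ => c * (n : ℝ) ^ (-(1 - β))) atTop (nhds 0) := by
    simpa using ((tendsto_rpow_neg_atTop (sub_pos.2 hβ)).comp
      tendsto_natCast_atTop_atTop).const_mul c
  filter_upwards [hdecay.eventually_le_const (by norm_num : (0 : ℝ) < 1 / 8),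
    eventually_ge_atTop 4] with n hn hn4
  have hn4' : (4 : ℝ) ≤ n := by exact_mod_cast hn4
  have hδn : (δ n : ℝ) ≤ 1 / 8 * n := calc
    (δ n : ℝ) ≤ c * (n : ℝ) ^ (-(1 - β) + 1) := by simpa using hδ n
    _ = c * (n : ℝ) ^ (-(1 - β)) * n := by rw [Real.rpow_add_one (by positivity), mul_assoc]
    _ ≤ 1 / 8 * n := by gcongr
  have : 2 * (2 * (δ n : ℝ) + 1) ≤ n := by linarith
  exact_mod_cast this

theorem snlm_risk_lower_general (α : ℝ) {C σ : ℝ} (hC : 0 ≤ C) (hσ : σ ≠ 0) :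
    ∃ c : ℝ, 0 < c ∧ ∃ M : ℕ, ∀ (n : ℕ) [NeZero n] (δ : ℕ) (t : ℝ),
      M ≤ δ → 2 * (2 * δ + 1) ≤ n → 0 ≤ t →
      c / n ≤ ⨆ h : HorizonFns α C, snlmRisk n σ δ t (horizonPixels n h.1) := by
  obtain ⟨c, hc, M, hrow⟩ := exists_pos_div_le_snlmRisk_rowPixels hσ
  refine ⟨c, hc, M, fun n _ δ t hδ hn ht => (hrow n δ t hδ hn ht).trans ?_⟩
  rw [← horizonPixels_one_div]
  exact le_ciSup (bddAbove_range_snlmRisk_horizonPixels α C σ t δ)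
    ⟨fun _ => 1 / n, const_mem_horizonFns α (1 / n) hC⟩

end LowerBound

/-- Theorem 5: lower bound for semi-oracle NLM under A1–A4:
there is `c > 0` such that for every admissible parameter choice `(δ_n, t_n)`,
`sup_{f ∈ H^α(C)} R_n(f, f̂^S) ≥ c/n` for all sufficiently large `n`. -/
theorem snlm_risk_lower (α C σ : ℝ) (hα : 1 ≤ α) (hC : 0 < C) (hσ : 0 < σ) :
    ∃ c : ℝ, 0 < c ∧ ∀ (δ : ℕ → ℕ) (t : ℕ → ℝ),
      -- A1: the window size tends to infinity
      Tendsto δ atTop atTop →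
      -- A2: the threshold is `σ² + t_n` with `t_n > 0`
      (∀ n, 0 < t n) →
      -- A3: eventually, neighborhoods whose noise-free distance is at least `1/2`
      -- never pass the full-oracle threshold `t_n`
      (∃ N₃ : ℕ, ∀ (n : ℕ) [NeZero n], N₃ ≤ n → ∀ (x : Px n → ℝ) (p q : Px n),
        (1 : ℝ) / 2 ≤ nlmDist2 n (δ n) x p q → t n < nlmDist2 n (δ n) x p q) →
      -- A4: `δ_n = O(n^β)` for some `β ≤ 0.3`
      (∃ β c₄ : ℝ, β ≤ 0.3 ∧ ∀ n : ℕ, (δ n : ℝ) ≤ c₄ * (n : ℝ) ^ β) →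
      ∃ N : ℕ, ∀ (n : ℕ) [NeZero n], N ≤ n →
        c / n ≤ ⨆ h : HorizonFns α C, snlmRisk n σ (δ n) (t n) (horizonPixels n h.1) := by
  obtain ⟨c, hc, M, hrisk⟩ := snlm_risk_lower_general α hC.le hσ.ne'
  refine ⟨c, hc, fun δ t hA1 hA2 _ ⟨β, c₄, hβ, hδ⟩ => ?_⟩
  obtain ⟨N, hN⟩ := eventually_atTop.1 <| (hA1.eventually_ge_atTop M).and <|
    eventually_two_mul_two_mul_add_one_le (hβ.trans_lt (by norm_num)) hδ
  exact ⟨N, fun n _ hn => hrisk n (δ n) (t n) (hN n hn).1 (hN n hn).2 (hA2 n).le⟩
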